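/- arXiv:1405.6477 — 3 statements merged into one kernel-verified Lean document; each statement's English description precedes it below -/
import Mathlib

section
/- Assume L·1_n = 0, τ ≠ 0 and p ≠ 0. Define the vectors ζ₁ = (1_n, 0_n, 0_n), ζ₂ = (1_n, (1/τ)R⁻¹1_n, 0_n), and ζ₃ = (−(τκ₂/p²)1_n, (κ₂/p)R⁻¹1_n, R⁻¹1_n) in ℝ^{3n}. Then A·ζ₁ = ζ₁, A·ζ₂ = ζ₂ + ζ₁ (so (ζ₁, ζ₂) is a right Jordan chain of A for the eigenvalue 1), and A·ζ₃ = (1−p)·ζ₃. -/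
open Matrix

/-- The 3n×3n block matrix A = [[I, τR, 0], [−κ₁L, I, −κ₂I], [−pL, 0, (1−p)I]]. -/
def Amat (n : ℕ) (L R : Matrix (Fin n) (Fin n) ℝ) (τ κ₁ κ₂ p : ℝ) :
    Matrix (Fin 3 × Fin n) (Fin 3 × Fin n) ℝ :=
  Matrix.of fun a b =>
    ![![(1 : Matrix (Fin n) (Fin n) ℝ), τ • R, 0],
      ![(-κ₁) • L, 1, (-κ₂) • (1 : Matrix (Fin n) (Fin n) ℝ)],
      ![(-p) • L, 0, (1 - p) • (1 : Matrix (Fin n) (Fin n) ℝ)]] a.1 b.1 a.2 b.2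

/-- The stacked vector (u, v, w) ∈ ℝ^{3n}. -/
def vec3 {n : ℕ} (u v w : Fin n → ℝ) : Fin 3 × Fin n → ℝ :=
  fun a => ![u, v, w] a.1 a.2

/-! When `L u = 0`, every `L`-block drops out and `A (u, v, w) = (u + τRv, v - κ₂w, (1 - p)w)`.
Hence `(A - 1)(u, v, 0) = (τRv, 0, 0)`, which produces the Jordan chain as soon as `τRv = u`,
and `(u, v, w)` is an eigenvector for `1 - p` as soon as `τRv = -pu` and `κ₂w = pv`. Taking
`w = R⁻¹e` with `e ∈ ker L` and solving these for `v` and then `u` yields `ζ₃`. -/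

theorem isUnit_of_isDiag {m α : Type*} [Fintype m] [DecidableEq m] [CommRing α]
    {M : Matrix m m α} (hM : M.IsDiag) (hunit : ∀ i, IsUnit (M i i)) : IsUnit M := by
  rw [← hM.diagonal_diag, isUnit_diagonal, Pi.isUnit_iff]
  exact hunit

section StackedVectors

variable {n : ℕ}

theorem vec3_add_vec3 (u v w u' v' w' : Fin n → ℝ) :
    vec3 u v w + vec3 u' v' w' = vec3 (u + u') (v + v') (w + w') := by
  ext ⟨a, i⟩
  fin_cases a <;> rfl

theorem smul_vec3 (c : ℝ) (u v w : Fin n → ℝ) :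
    c • vec3 u v w = vec3 (c • u) (c • v) (c • w) := by
  ext ⟨a, i⟩
  fin_cases a <;> rfl

theorem comp_mulVec_vec3 (B : Matrix (Fin 3) (Fin 3) (Matrix (Fin n) (Fin n) ℝ))
    (u v w : Fin n → ℝ) :
    comp _ _ _ _ _ B *ᵥ vec3 u v w =
      vec3 (B 0 0 *ᵥ u + B 0 1 *ᵥ v + B 0 2 *ᵥ w) (B 1 0 *ᵥ u + B 1 1 *ᵥ v + B 1 2 *ᵥ w)
        (B 2 0 *ᵥ u + B 2 1 *ᵥ v + B 2 2 *ᵥ w) := by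
  have hrow (a : Fin 3) (i : Fin n) : (comp _ _ _ _ _ B *ᵥ vec3 u v w) (a, i) =
      (B a 0 *ᵥ u + B a 1 *ᵥ v + B a 2 *ᵥ w) i := by
    simp only [mulVec, dotProduct, Fintype.sum_prod_type, Fin.sum_univ_three]
    rfl
  ext ⟨a, i⟩
  rw [hrow]
  fin_cases a <;> rfl

end StackedVectors

section BlockAction

variable {n : ℕ} (L R : Matrix (Fin n) (Fin n) ℝ) (τ κ₁ κ₂ p : ℝ) (u v w : Fin n → ℝ)

theorem Amat_eq_comp :
    Amat n L R τ κ₁ κ₂ p = comp _ _ _ _ _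
      !![1, τ • R, 0;
        -κ₁ • L, 1, -κ₂ • (1 : Matrix (Fin n) (Fin n) ℝ);
        -p • L, 0, (1 - p) • (1 : Matrix (Fin n) (Fin n) ℝ)] :=
  rfl

theorem Amat_mulVec_vec3 :
    Amat n L R τ κ₁ κ₂ p *ᵥ vec3 u v w =
      vec3 (u + τ • (R *ᵥ v)) (-κ₁ • (L *ᵥ u) + v - κ₂ • w) (-p • (L *ᵥ u) + (1 - p) • w) := by
  rw [Amat_eq_comp, comp_mulVec_vec3]
  simp [smul_mulVec, neg_mulVec, sub_eq_add_neg]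

variable {L R τ κ₁ κ₂ p u v w}

theorem Amat_mulVec_vec3_of_mulVec_eq_zero (hu : L *ᵥ u = 0) :
    Amat n L R τ κ₁ κ₂ p *ᵥ vec3 u v w =
      vec3 (u + τ • (R *ᵥ v)) (v - κ₂ • w) ((1 - p) • w) := by
  simp only [Amat_mulVec_vec3, hu, smul_zero, zero_add]

theorem Amat_mulVec_vec3_zero_right (hu : L *ᵥ u = 0) :
    Amat n L R τ κ₁ κ₂ p *ᵥ vec3 u v 0 = vec3 u v 0 + vec3 (τ • (R *ᵥ v)) 0 0 := by
  simp only [Amat_mulVec_vec3_of_mulVec_eq_zero hu, vec3_add_vec3, smul_zero, sub_zero, add_zero]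

theorem Amat_mulVec_vec3_zero_zero (hu : L *ᵥ u = 0) :
    Amat n L R τ κ₁ κ₂ p *ᵥ vec3 u 0 0 = vec3 u 0 0 := by
  simp only [Amat_mulVec_vec3_of_mulVec_eq_zero hu, mulVec_zero, smul_zero, sub_zero, add_zero]

theorem Amat_mulVec_vec3_eq_one_sub_smul (hu : L *ᵥ u = 0) (huv : τ • (R *ᵥ v) = -p • u)
    (hvw : κ₂ • w = p • v) :
    Amat n L R τ κ₁ κ₂ p *ᵥ vec3 u v w = (1 - p) • vec3 u v w := by
  have hsub (x : Fin n → ℝ) : (1 - p) • x = x - p • x := by rw [sub_smul, one_smul]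
  rw [Amat_mulVec_vec3_of_mulVec_eq_zero hu, smul_vec3, huv, hvw, neg_smul, ← sub_eq_add_neg,
    hsub u, hsub v]

end BlockAction

theorem stmt3_general {n : ℕ} {L R : Matrix (Fin n) (Fin n) ℝ} (hR : IsUnit R)
    {τ κ₁ κ₂ p : ℝ} (hτ : τ ≠ 0) (hp : p ≠ 0) {e : Fin n → ℝ} (he : L *ᵥ e = 0) :
    Amat n L R τ κ₁ κ₂ p *ᵥ vec3 e 0 0 = vec3 e 0 0
    ∧ Amat n L R τ κ₁ κ₂ p *ᵥ vec3 e ((1 / τ) • (R⁻¹ *ᵥ e)) 0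
        = vec3 e ((1 / τ) • (R⁻¹ *ᵥ e)) 0 + vec3 e 0 0
    ∧ Amat n L R τ κ₁ κ₂ p *ᵥ
          vec3 (-(τ * κ₂ / p ^ 2) • e) ((κ₂ / p) • (R⁻¹ *ᵥ e)) (R⁻¹ *ᵥ e)
        = (1 - p) • vec3 (-(τ * κ₂ / p ^ 2) • e) ((κ₂ / p) • (R⁻¹ *ᵥ e)) (R⁻¹ *ᵥ e) := by
  have hRe : R *ᵥ (R⁻¹ *ᵥ e) = e := by
    rw [mulVec_mulVec, mul_nonsing_inv R ((isUnit_iff_isUnit_det R).mp hR), one_mulVec]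
  refine ⟨Amat_mulVec_vec3_zero_zero he, ?_, Amat_mulVec_vec3_eq_one_sub_smul ?_ ?_ ?_⟩
  · rw [Amat_mulVec_vec3_zero_right he, mulVec_smul, hRe, smul_smul, mul_one_div_cancel hτ,
      one_smul]
  · rw [mulVec_smul, he, smul_zero]
  · rw [mulVec_smul, hRe, smul_smul, smul_smul]
    congr 1
    field_simp
  · rw [smul_smul, mul_div_cancel₀ κ₂ hp]

theorem stmt3 (n : ℕ) (hn : 1 ≤ n) (L R : Matrix (Fin n) (Fin n) ℝ)
    (hRdiag : ∀ i j, i ≠ j → R i j = 0) (hRpos : ∀ i, 0 < R i i)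
    (τ κ₁ κ₂ p : ℝ) (hτ : τ ≠ 0) (hp : p ≠ 0)
    (hL1 : L *ᵥ (fun _ => (1 : ℝ)) = 0) :
    (Amat n L R τ κ₁ κ₂ p) *ᵥ (vec3 (fun _ => 1) 0 0) = vec3 (fun _ => 1) 0 0
    ∧ (Amat n L R τ κ₁ κ₂ p) *ᵥ
          (vec3 (fun _ => 1) ((1 / τ) • (R⁻¹ *ᵥ fun _ => 1)) 0)
        = vec3 (fun _ => 1) ((1 / τ) • (R⁻¹ *ᵥ fun _ => 1)) 0
          + vec3 (fun _ => 1) 0 0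
    ∧ (Amat n L R τ κ₁ κ₂ p) *ᵥ
          (vec3 (fun _ => -(τ * κ₂ / p ^ 2)) ((κ₂ / p) • (R⁻¹ *ᵥ fun _ => 1))
            (R⁻¹ *ᵥ fun _ => 1))
        = (1 - p) • vec3 (fun _ => -(τ * κ₂ / p ^ 2)) ((κ₂ / p) • (R⁻¹ *ᵥ fun _ => 1))
            (R⁻¹ *ᵥ fun _ => 1) := by
  have hR : IsUnit R := isUnit_of_isDiag @hRdiag fun i => (hRpos i).ne'.isUnit
  simpa only [Pi.smul_def, smul_eq_mul, mul_one] using stmt3_general hR hτ hp hL1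
end

section
/- Assume ξᵀL = 0, τ ≠ 0 and p ≠ 0. Suppose ζ = (x, s, y) ∈ ℂ^{3n} is an eigenvector of A with eigenvalue μ ∈ ℂ satisfying μ ≠ 1 and μ ≠ 1−p. Then ξᵀy = 0, ξᵀs = 0, and ξᵀR⁻¹x = 0; i.e. every eigenvector of A for an eigenvalue outside {1, 1−p} is annihilated by the three left (generalized) eigenvectors associated to the eigenvalues 1 and 1−p. -/
/-!
Since `ξᵀL = 0`, the row vectors `w₂ = (0, 0, ξᵀ)`, `w₁ = (0, ξᵀ, 0)`, `w₀ = (ξᵀR⁻¹, 0, 0)` satisfy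
`w₂A = (1 - p)w₂`, `w₁A = w₁ - κ₂w₂` and `w₀A = w₀ + τw₁`. Pairing a relation `wA = νw + v` with an
eigenvector `ζ` gives `(μ - ν)wζ = vζ`, so for `μ ∉ {1, 1 - p}` the pairings `w₂ζ`, `w₁ζ`, `w₀ζ`
vanish one after the other.
-/

open Matrix

theorem isUnit_of_isDiag_s6 {m K : Type*} [Fintype m] [DecidableEq m] [Field K] {R : Matrix m m K}
    (hR : R.IsDiag) (hne : ∀ i, R i i ≠ 0) : IsUnit R := by
  rw [← hR.diagonal_diag, isUnit_diagonal, Pi.isUnit_iff]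
  exact fun i => (hne i).isUnit

section LeftEigenvector

variable {ι K E : Type*} [Fintype ι] [CommRing K] [CommRing E] [NoZeroDivisors E]

theorem map_dotProduct_eq_zero_of_vecMul_eq (f : K →+* E) {A : Matrix ι ι K} {w v : ι → K}
    {ν c : K} {μ : E} {ζ : ι → E} (hw : w ᵥ* A = ν • w + c • v) (hζ : A.map f *ᵥ ζ = μ • ζ)
    (hμ : μ ≠ f ν) (hv : (fun i => f (v i)) ⬝ᵥ ζ = 0) : (fun i => f (w i)) ⬝ᵥ ζ = 0 := by
  have hfw : (fun i => f (w i)) ᵥ* A.map f =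
      f ν • (fun i => f (w i)) + f c • fun i => f (v i) := by
    ext i
    simpa [Function.comp_def, hw] using (f.map_vecMul A w i).symm
  have hpair : μ * ((fun i => f (w i)) ⬝ᵥ ζ) = f ν * ((fun i => f (w i)) ⬝ᵥ ζ) :=
    calc μ * ((fun i => f (w i)) ⬝ᵥ ζ)
        = (fun i => f (w i)) ⬝ᵥ (A.map f *ᵥ ζ) := by rw [hζ, dotProduct_smul, smul_eq_mul]
      _ = ((fun i => f (w i)) ᵥ* A.map f) ⬝ᵥ ζ := dotProduct_mulVec _ _ _
      _ = f ν * ((fun i => f (w i)) ⬝ᵥ ζ) := by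
        rw [hfw, add_dotProduct, smul_dotProduct, smul_dotProduct, hv, smul_zero, add_zero,
          smul_eq_mul]
  exact (mul_eq_mul_right_iff.mp hpair).resolve_left hμ

end LeftEigenvector

section BlockVector

variable {I J m n K E : Type*} [DecidableEq I]

/-- The block vector indexed by `I × m` whose `k`-th block is `v` and whose other blocks are zero,
used to write the left generalized eigenvectors of a block matrix. -/
def blockSingle [Zero K] (k : I) (v : m → K) : I × m → K :=
  Function.uncurry (Pi.single k v)

theorem blockSingle_apply [Zero K] (k : I) (v : m → K) (a : I × m) :
    blockSingle k v a = if a.1 = k then v a.2 else 0 := by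
  simp only [blockSingle, Function.uncurry, Pi.single_apply, ite_apply, Pi.zero_apply]

variable [Fintype I] [Fintype m]

theorem map_blockSingle_dotProduct [NonAssocSemiring K] [NonAssocSemiring E] (f : K →+* E)
    (k : I) (v : m → K) (ζ : I × m → E) :
    (fun a => f (blockSingle k v a)) ⬝ᵥ ζ = (fun i => f (v i)) ⬝ᵥ fun i => ζ (k, i) := by
  simp [dotProduct, Fintype.sum_prod_type_right, blockSingle_apply, apply_ite f]

theorem blockSingle_vecMul_comp [NonUnitalNonAssocSemiring K] (k : I) (v : m → K)
    (M : Matrix I J (Matrix m n K)) (b : J × n) :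
    (blockSingle k v ᵥ* Matrix.comp I J m n K M) b = (v ᵥ* M k b.1) b.2 := by
  simp [vecMul, dotProduct, Fintype.sum_prod_type_right, blockSingle_apply]

theorem map_dotProduct_block_eq_zero_of_vecMul_eq [CommRing K] [CommRing E] [NoZeroDivisors E]
    (f : K →+* E) {A : Matrix (I × m) (I × m) K} {k l : I} {η θ : m → K} {ν c : K} {μ : E}
    {ζ : I × m → E}
    (hη : blockSingle k η ᵥ* A = ν • blockSingle k η + c • blockSingle l θ)
    (hζ : A.map f *ᵥ ζ = μ • ζ) (hμ : μ ≠ f ν)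
    (hθ : ((fun i => f (θ i)) ⬝ᵥ fun i => ζ (l, i)) = 0) :
    ((fun i => f (η i)) ⬝ᵥ fun i => ζ (k, i)) = 0 := by
  rw [← map_blockSingle_dotProduct] at hθ ⊢
  exact map_dotProduct_eq_zero_of_vecMul_eq f hη hζ hμ hθ

end BlockVector

section BlockMatrix

variable {m K E : Type*} [Fintype m] [DecidableEq m] [CommRing K]

/-- The matrix `A` of the theorem over an arbitrary commutative ring and index type, flattened from
a `3 × 3` matrix of blocks so that it acts on vectors indexed by (block, position). -/
def blockMatrix (L R : Matrix m m K) (τ κ₁ κ₂ p : K) : Matrix (Fin 3 × m) (Fin 3 × m) K :=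
  Matrix.comp (Fin 3) (Fin 3) m m K
    !![1, τ • R, 0;
      (-κ₁) • L, 1, (-κ₂) • 1;
      (-p) • L, 0, (1 - p) • 1]

theorem blockSingle_two_vecMul_blockMatrix {ξ : m → K} {L : Matrix m m K} (hξL : ξ ᵥ* L = 0)
    (R : Matrix m m K) (τ κ₁ κ₂ p : K) :
    blockSingle 2 ξ ᵥ* blockMatrix L R τ κ₁ κ₂ p = (1 - p) • blockSingle 2 ξ := by
  ext ⟨k, i⟩
  fin_cases k <;>
    simp [blockMatrix, blockSingle_vecMul_comp, blockSingle_apply, vecMul_neg, vecMul_smul, hξL]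

theorem blockSingle_one_vecMul_blockMatrix {ξ : m → K} {L : Matrix m m K} (hξL : ξ ᵥ* L = 0)
    (R : Matrix m m K) (τ κ₁ κ₂ p : K) :
    blockSingle 1 ξ ᵥ* blockMatrix L R τ κ₁ κ₂ p =
      blockSingle 1 ξ + (-κ₂) • blockSingle 2 ξ := by
  ext ⟨k, i⟩
  fin_cases k <;>
    simp [blockMatrix, blockSingle_vecMul_comp, blockSingle_apply, vecMul_neg, vecMul_smul, hξL]

theorem blockSingle_zero_vecMul_blockMatrix (η : m → K) (L R : Matrix m m K) (τ κ₁ κ₂ p : K) :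
    blockSingle 0 η ᵥ* blockMatrix L R τ κ₁ κ₂ p =
      blockSingle 0 η + τ • blockSingle 1 (η ᵥ* R) := by
  ext ⟨k, i⟩
  fin_cases k <;> simp [blockMatrix, blockSingle_vecMul_comp, blockSingle_apply, vecMul_smul]

theorem stmt6_general [CommRing E] [NoZeroDivisors E] (f : K →+* E) {L R : Matrix m m K}
    (hR : IsUnit R) {τ κ₁ κ₂ p : K} {ξ : m → K} (hξL : ξ ᵥ* L = 0) {μ : E} (hμ1 : μ ≠ 1)
    (hμ2 : μ ≠ 1 - f p) {ζ : Fin 3 × m → E}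
    (heig : (blockMatrix L R τ κ₁ κ₂ p).map f *ᵥ ζ = μ • ζ) :
    ((fun i => f (ξ i)) ⬝ᵥ fun i => ζ (2, i)) = 0 ∧
      ((fun i => f (ξ i)) ⬝ᵥ fun i => ζ (1, i)) = 0 ∧
      ((fun i => f ((ξ ᵥ* R⁻¹) i)) ⬝ᵥ fun i => ζ (0, i)) = 0 := by
  have hμ1' : μ ≠ f 1 := by rwa [map_one]
  have hμ2' : μ ≠ f (1 - p) := by rwa [map_sub, map_one]
  have hw₂ : blockSingle 2 ξ ᵥ* blockMatrix L R τ κ₁ κ₂ p =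
      (1 - p) • blockSingle 2 ξ + (0 : K) • blockSingle 2 0 := by
    rw [blockSingle_two_vecMul_blockMatrix hξL, zero_smul, add_zero]
  have hw₁ : blockSingle 1 ξ ᵥ* blockMatrix L R τ κ₁ κ₂ p =
      (1 : K) • blockSingle 1 ξ + (-κ₂) • blockSingle 2 ξ := by
    rw [blockSingle_one_vecMul_blockMatrix hξL, one_smul]
  have hw₀ : blockSingle 0 (ξ ᵥ* R⁻¹) ᵥ* blockMatrix L R τ κ₁ κ₂ p =
      (1 : K) • blockSingle 0 (ξ ᵥ* R⁻¹) + τ • blockSingle 1 ξ := by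
    rw [blockSingle_zero_vecMul_blockMatrix, vecMul_vecMul,
      nonsing_inv_mul R ((isUnit_iff_isUnit_det R).mp hR), vecMul_one, one_smul]
  have hy := map_dotProduct_block_eq_zero_of_vecMul_eq f hw₂ heig hμ2' (by simp [dotProduct])
  have hs := map_dotProduct_block_eq_zero_of_vecMul_eq f hw₁ heig hμ1' hy
  exact ⟨hy, hs, map_dotProduct_block_eq_zero_of_vecMul_eq f hw₀ heig hμ1' hs⟩

end BlockMatrix

theorem Amat_eq_blockMatrix (n : ℕ) (L R : Matrix (Fin n) (Fin n) ℝ) (τ κ₁ κ₂ p : ℝ) :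
    Amat n L R τ κ₁ κ₂ p = blockMatrix L R τ κ₁ κ₂ p :=
  rfl

theorem stmt6 (n : ℕ) (hn : 1 ≤ n) (L R : Matrix (Fin n) (Fin n) ℝ)
    (hRdiag : ∀ i j, i ≠ j → R i j = 0) (hRpos : ∀ i, 0 < R i i)
    (τ κ₁ κ₂ p : ℝ) (hτ : τ ≠ 0) (hp : p ≠ 0)
    (ξ : Fin n → ℝ) (hξL : ξ ᵥ* L = 0)
    (μ : ℂ) (hμ1 : μ ≠ 1) (hμ2 : μ ≠ 1 - (p : ℂ))
    (ζ : Fin 3 × Fin n → ℂ) (hζ : ζ ≠ 0)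
    (heig : (Amat n L R τ κ₁ κ₂ p).map ((↑) : ℝ → ℂ) *ᵥ ζ = μ • ζ) :
    ((fun i => (ξ i : ℂ)) ⬝ᵥ (fun i => ζ (2, i)) = 0)
    ∧ ((fun i => (ξ i : ℂ)) ⬝ᵥ (fun i => ζ (1, i)) = 0)
    ∧ ((fun i => ((ξ ᵥ* R⁻¹) i : ℂ)) ⬝ᵥ (fun i => ζ (0, i)) = 0) :=
  stmt6_general Complex.ofRealHom (isUnit_of_isDiag_s6 (fun i j => hRdiag i j) fun i => (hRpos i).ne')
    hξL hμ1 hμ2 (Amat_eq_blockMatrix n L R τ κ₁ κ₂ p ▸ heig)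
end

section
/- Let ν_1, …, ν_{n−1} be strictly positive real numbers, let τ > 0, and set μ_max := (max_l ν_l)/τ. Then the following are equivalent: (A) |1−p| < 1 and for each l every complex root of g_{ν_l} lies in the open unit disc {λ : |λ| < 1}; (B) the three conditions (i) 0 < p < 2, (ii) 0 < κ₁ − κ₂ < 2κ₁/(3p), and (iii) τ < p(κ₂ − p(κ₁−κ₂))/(μ_max·(κ₁ − p(κ₁−κ₂))²) all hold. -/
/-!
The Möbius map `w = (z + 1) / (z - 1)` exchanges the open unit disc and the open left half-plane, so
the cubic Jury criterion follows from the Routh–Hurwitz one. For the latter, split off a real root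
`-r`: if `a w³ + b w² + c w + d = (w + r) (a w² + s w + t)`, then `b c - a d = s (a r² + c)`. Each
Jury inequality for `g_ν` either does not involve the size of `ν`, follows from the others, or is an
upper bound on `ν`, so that only the largest `ν l` matters.
-/

open Polynomial

/-- The cubic polynomial g_ν(λ) = (λ−1)²(λ−1+p) + ((λ−1)κ₁ + p(κ₁−κ₂))ν over ℂ. -/
noncomputable def gPoly (κ₁ κ₂ p : ℝ) (ν : ℂ) : Polynomial ℂ :=
  (X - 1) ^ 2 * (X - 1 + C (p : ℂ))
    + ((X - 1) * C (κ₁ : ℂ) + C ((p : ℂ) * ((κ₁ : ℂ) - (κ₂ : ℂ)))) * C ν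

section Stability

variable {R : Type*} [CommRing R] [Algebra R ℂ]

/-- A polynomial is Hurwitz stable if all its complex roots lie in the open left half-plane; this is
asymptotic stability in continuous time. The zero polynomial is not Hurwitz stable. -/
def IsHurwitzStable (f : R[X]) : Prop :=
  ∀ w : ℂ, aeval w f = 0 → w.re < 0

/-- A polynomial is Schur stable if all its complex roots lie in the open unit disc; this is
asymptotic stability in discrete time. The zero polynomial is not Schur stable. -/
def IsSchurStable (f : R[X]) : Prop :=
  ∀ z : ℂ, aeval z f = 0 → ‖z‖ < 1

theorem isSchurStable_iff_forall_isRoot {f : ℂ[X]} :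
    IsSchurStable f ↔ ∀ z, f.IsRoot z → ‖z‖ < 1 := by
  simp only [IsSchurStable, coe_aeval_eq_eval, IsRoot.def]

/-- The Cayley transform `(X - 1) ^ n * f ((X + 1) / (X - 1))` of a polynomial `f` of degree `n`,
which turns Schur stability into Hurwitz stability. -/
noncomputable def cayleyTransform (f : R[X]) : R[X] :=
  ∑ i ∈ Finset.range (f.natDegree + 1), C (f.coeff i) * (X + 1) ^ i * (X - 1) ^ (f.natDegree - i)

theorem isHurwitzStable_mul {f g : R[X]} :
    IsHurwitzStable (f * g) ↔ IsHurwitzStable f ∧ IsHurwitzStable g := by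
  simp only [IsHurwitzStable, map_mul, mul_eq_zero, or_imp, forall_and]

theorem isSchurStable_map_algebraMap {f : R[X]} :
    IsSchurStable (f.map (algebraMap R ℂ)) ↔ IsSchurStable f := by
  simp only [IsSchurStable, aeval_map_algebraMap]

theorem aeval_cayleyTransform (f : R[X]) {w : ℂ} (hw : w ≠ 1) :
    aeval w (cayleyTransform f) = (w - 1) ^ f.natDegree * aeval ((w + 1) / (w - 1)) f := by
  rw [aeval_eq_sum_range (p := f), Finset.mul_sum]
  simp only [cayleyTransform, map_sum, map_mul, map_pow, map_add, map_sub, map_one, aeval_X,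
    aeval_C, Algebra.smul_def]
  refine Finset.sum_congr rfl fun i hi => ?_
  rw [← pow_sub_mul_pow (w - 1) (Finset.mem_range_succ_iff.1 hi), div_pow]
  field_simp

theorem aeval_one_cayleyTransform (f : R[X]) :
    aeval (1 : ℂ) (cayleyTransform f) = algebraMap R ℂ f.leadingCoeff * 2 ^ f.natDegree := by
  simp only [cayleyTransform, map_sum, map_mul, map_pow, map_add, map_sub, map_one, aeval_X,
    aeval_C, sub_self]
  rw [Finset.sum_range_succ, Finset.sum_eq_zero fun i hi => ?_]
  · norm_num
  · rw [zero_pow (Nat.sub_ne_zero_of_lt (Finset.mem_range.1 hi)), mul_zero]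

theorem add_one_div_sub_one_ne_one (z : ℂ) : (z + 1) / (z - 1) ≠ 1 := by
  rcases eq_or_ne z 1 with rfl | hz
  · simp
  · rw [Ne, div_eq_one_iff_eq (sub_ne_zero.2 hz)]
    intro h
    norm_num [sub_eq_add_neg] at h

theorem add_one_div_sub_one_involutive {z : ℂ} (hz : z ≠ 1) :
    ((z + 1) / (z - 1) + 1) / ((z + 1) / (z - 1) - 1) = z := by
  have hz' : z - 1 ≠ 0 := sub_ne_zero.2 hz
  rw [div_add_one hz', div_sub_one hz', div_div_div_cancel_right₀ hz']
  ring

theorem re_add_one_div_sub_one_neg_iff {z : ℂ} (hz : z ≠ 1) :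
    ((z + 1) / (z - 1)).re < 0 ↔ ‖z‖ < 1 := by
  have hpos : 0 < Complex.normSq (z - 1) := Complex.normSq_pos.2 (sub_ne_zero.2 hz)
  have hre : ((z + 1) / (z - 1)).re = (‖z‖ ^ 2 - 1) / Complex.normSq (z - 1) := by
    rw [Complex.div_re, ← add_div, ← Complex.normSq_eq_norm_sq, Complex.normSq_apply z]
    simp only [Complex.add_re, Complex.sub_re, Complex.one_re, Complex.add_im, Complex.sub_im,
      Complex.one_im]
    ring
  rw [hre, div_lt_iff₀ hpos, zero_mul, sub_neg, sq_lt_one_iff₀ (norm_nonneg z)]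

theorem isHurwitzStable_cayleyTransform_iff [FaithfulSMul R ℂ] {f : R[X]} (hf : f.eval 1 ≠ 0) :
    IsHurwitzStable (cayleyTransform f) ↔ IsSchurStable f := by
  have hf₀ : f ≠ 0 := by
    rintro rfl
    exact hf eval_zero
  have hinj := FaithfulSMul.algebraMap_injective R ℂ
  constructor
  · intro h z hz
    have hz₁ : z ≠ 1 := by
      rintro rfl
      rw [← map_one (algebraMap R ℂ), aeval_algebraMap_apply, map_eq_zero_iff _ hinj,
        coe_aeval_eq_eval] at hz
      exact hf hz
    refine (re_add_one_div_sub_one_neg_iff hz₁).1 (h _ ?_)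
    rw [aeval_cayleyTransform f (add_one_div_sub_one_ne_one z),
      add_one_div_sub_one_involutive hz₁, hz, mul_zero]
  · intro h w hw
    have hw₁ : w ≠ 1 := by
      rintro rfl
      rw [aeval_one_cayleyTransform] at hw
      simp [map_eq_zero_iff _ hinj, hf₀] at hw
    rw [aeval_cayleyTransform f hw₁] at hw
    have hroot := (mul_eq_zero.1 hw).resolve_left (pow_ne_zero _ (sub_ne_zero.2 hw₁))
    have hnorm := h _ hroot
    rwa [← re_add_one_div_sub_one_neg_iff (add_one_div_sub_one_ne_one w),
      add_one_div_sub_one_involutive hw₁] at hnorm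

end Stability

theorem exists_isRoot_of_odd_natDegree {f : ℝ[X]} (hf : Odd f.natDegree) : ∃ x, f.IsRoot x := by
  by_contra! h
  wlog hlc : 0 ≤ f.leadingCoeff generalizing f
  · refine this (f := -f) (by rwa [natDegree_neg]) (fun x hx => h x ?_) ?_
    · simpa using hx
    · rw [leadingCoeff_neg]
      linarith
  have hpos := zero_lt_eval_of_roots_lt_of_leadingCoeff_nonneg (x := 0)
    (fun y hy => (h y hy).elim) hlc
  have hneg := zero_lt_negOnePow_mul_eval_of_lt_roots_of_leadingCoeff_nonneg (x := 0)
    (fun y hy => (h y hy).elim) hlc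
  rw [Int.negOnePow_odd _ (by exact_mod_cast hf)] at hneg
  push_cast at hneg
  linarith

section RealCoefficients

variable {a b c d : ℝ}

theorem isHurwitzStable_X_add_C_iff : IsHurwitzStable (X + C a) ↔ 0 < a := by
  simp only [IsHurwitzStable, map_add, aeval_X, aeval_C, add_eq_zero_iff_eq_neg, forall_eq]
  simp

theorem IsHurwitzStable.quadratic_coeff_pos (ha : 0 < a)
    (h : IsHurwitzStable (C a * X ^ 2 + C b * X + C c)) : 0 < b ∧ 0 < c := by
  have ha' : (a : ℂ) ≠ 0 := mod_cast ha.ne'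
  obtain ⟨w, hw⟩ := IsAlgClosed.exists_aeval_eq_zero ℂ (C a * X ^ 2 + C b * X + C c)
    (by rw [degree_quadratic ha.ne']; decide)
  obtain ⟨w', hsum⟩ : ∃ w' : ℂ, (b : ℂ) = -(a * (w + w')) :=
    ⟨-(b / a) - w, by field_simp; ring⟩
  have hprod : (c : ℂ) = a * (w * w') := by
    simp only [map_add, map_mul, map_pow, aeval_C, aeval_X, Complex.coe_algebraMap, hsum] at hw
    linear_combination hw
  have hw' : aeval w' (C a * X ^ 2 + C b * X + C c) = 0 := by
    simp only [map_add, map_mul, map_pow, aeval_C, aeval_X, Complex.coe_algebraMap, hsum, hprod]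
    ring
  have hre := h w hw
  have hre' := h w' hw'
  have him : w'.im = -w.im := by
    have := congrArg Complex.im hsum
    simp only [Complex.ofReal_im, Complex.neg_im, Complex.im_ofReal_mul, Complex.add_im,
      zero_eq_neg, mul_eq_zero, ha.ne', false_or] at this
    linarith
  have hb : b = a * (-w.re + -w'.re) := by
    have := congrArg Complex.re hsum
    simp only [Complex.ofReal_re, Complex.neg_re, Complex.re_ofReal_mul, Complex.add_re] at this
    linarith
  have hc : c = a * (-w.re * -w'.re + w.im ^ 2) := by
    have := congrArg Complex.re hprod
    simp only [Complex.ofReal_re, Complex.re_ofReal_mul, Complex.mul_re w, him] at this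
    linarith
  have hx : 0 < -w.re := neg_pos.2 hre
  have hx' : 0 < -w'.re := neg_pos.2 hre'
  rw [hb, hc]
  constructor <;> positivity

theorem isHurwitzStable_quadratic_of_pos (ha : 0 < a) (hb : 0 < b) (hc : 0 < c) :
    IsHurwitzStable (C a * X ^ 2 + C b * X + C c) := by
  intro w hw
  have hre : a * (w.re ^ 2 - w.im ^ 2) + b * w.re + c = 0 := by
    simpa [pow_two] using congrArg Complex.re hw
  have him : w.im * (2 * a * w.re + b) = 0 := by
    have := congrArg Complex.im hw
    simp only [map_add, map_mul, map_pow, aeval_C, aeval_X, Complex.coe_algebraMap, sq w,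
      Complex.add_im, Complex.im_ofReal_mul, Complex.mul_im w, Complex.ofReal_im,
      Complex.zero_im] at this
    linarith
  by_contra! hx
  have hreal : w.im = 0 := (mul_eq_zero.1 him).resolve_right (by positivity)
  have : 0 < a * (w.re ^ 2 - w.im ^ 2) + b * w.re + c := by
    rw [hreal, zero_pow two_ne_zero, sub_zero]
    positivity
  exact this.ne' hre

theorem isHurwitzStable_quadratic_iff (ha : 0 < a) :
    IsHurwitzStable (C a * X ^ 2 + C b * X + C c) ↔ 0 < b ∧ 0 < c :=
  ⟨IsHurwitzStable.quadratic_coeff_pos ha,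
    fun ⟨hb, hc⟩ => isHurwitzStable_quadratic_of_pos ha hb hc⟩

theorem exists_cubic_eq_mul (ha : a ≠ 0) (b c d : ℝ) :
    ∃ r s t : ℝ, b = a * r + s ∧ c = r * s + t ∧ d = r * t ∧
      C a * X ^ 3 + C b * X ^ 2 + C c * X + C d = (X + C r) * (C a * X ^ 2 + C s * X + C t) := by
  obtain ⟨x, hx⟩ := exists_isRoot_of_odd_natDegree
    (f := C a * X ^ 3 + C b * X ^ 2 + C c * X + C d) (by rw [natDegree_cubic ha]; decide)
  simp only [IsRoot.def, eval_add, eval_mul, eval_C, eval_pow, eval_X] at hx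
  obtain rfl : d = -x * (c + x * (b + a * x)) := by linear_combination hx
  refine ⟨-x, b + a * x, c + x * (b + a * x), by ring, by ring, rfl, ?_⟩
  simp only [C_add, C_mul, C_neg]
  ring

theorem isHurwitzStable_cubic_iff (ha : 0 < a) :
    IsHurwitzStable (C a * X ^ 3 + C b * X ^ 2 + C c * X + C d) ↔
      0 < b ∧ 0 < d ∧ a * d < b * c := by
  obtain ⟨r, s, t, rfl, rfl, rfl, hfac⟩ := exists_cubic_eq_mul ha.ne' b c d
  have hdet : (a * r + s) * (r * s + t) - a * (r * t) = s * (a * r ^ 2 + (r * s + t)) := by ring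
  rw [hfac, isHurwitzStable_mul, isHurwitzStable_X_add_C_iff, isHurwitzStable_quadratic_iff ha,
    ← sub_pos (b := a * (r * t)), hdet]
  constructor
  · rintro ⟨hr, hs, ht⟩
    refine ⟨?_, ?_, ?_⟩ <;> positivity
  · rintro ⟨hb, hd, hdet_pos⟩
    have hc : 0 < r * s + t := by
      refine pos_of_mul_pos_right (a := a * r + s) ?_ hb.le
      linarith [mul_pos ha hd]
    have hs : 0 < s := pos_of_mul_pos_left hdet_pos (by positivity)
    have hr : 0 < r := by
      by_contra! hr
      have ht : t < 0 := neg_of_mul_pos_right hd hr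
      linarith [mul_nonpos_of_nonpos_of_nonneg hr hs.le]
    exact ⟨hr, hs, pos_of_mul_pos_right hd hr.le⟩

theorem IsSchurStable.eval_one_pos {f : ℝ[X]} (hf : IsSchurStable f) (hlc : 0 ≤ f.leadingCoeff) :
    0 < f.eval 1 := by
  refine zero_lt_eval_of_roots_lt_of_leadingCoeff_nonneg (fun y hy => ?_) hlc
  have hnorm : ‖(y : ℂ)‖ < 1 := hf y <| by
    rw [← Complex.coe_algebraMap, aeval_algebraMap_apply, coe_aeval_eq_eval, hy.eq_zero, map_zero]
  rw [Complex.norm_real] at hnorm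
  exact (le_abs_self y).trans_lt hnorm

theorem cayleyTransform_cubic (ha : a ≠ 0) (b c d : ℝ) :
    cayleyTransform (C a * X ^ 3 + C b * X ^ 2 + C c * X + C d) =
      C (a + b + c + d) * X ^ 3 + C (3 * a + b - c - 3 * d) * X ^ 2 +
        C (3 * a - b - c + 3 * d) * X + C (a - b + c - d) := by
  set f := C a * X ^ 3 + C b * X ^ 2 + C c * X + C d with hf
  have h₀ : f.coeff 0 = d := by simp [hf]
  have h₁ : f.coeff 1 = c := by simp [hf, coeff_C]
  have h₂ : f.coeff 2 = b := by simp [hf]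
  have h₃ : f.coeff 3 = a := by simp [hf]
  rw [cayleyTransform, natDegree_cubic ha]
  simp only [Finset.sum_range_succ, Finset.sum_range_zero, h₀, h₁, h₂, h₃, Nat.reduceSub, C_add,
    C_sub, C_mul, map_ofNat]
  ring

theorem isSchurStable_cubic_iff (ha : 0 < a) :
    IsSchurStable (C a * X ^ 3 + C b * X ^ 2 + C c * X + C d) ↔
      0 < a + b + c + d ∧ 0 < 3 * a + b - c - 3 * d ∧ 0 < a - b + c - d ∧
        0 < a ^ 2 - a * c + b * d - d ^ 2 := by
  set f := C a * X ^ 3 + C b * X ^ 2 + C c * X + C d with hf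
  have heval : f.eval 1 = a + b + c + d := by simp [hf]
  have hlc : 0 ≤ f.leadingCoeff := by rw [hf, leadingCoeff_cubic ha.ne']; exact ha.le
  have hstable (h₁ : 0 < a + b + c + d) : IsSchurStable f ↔
      0 < 3 * a + b - c - 3 * d ∧ 0 < a - b + c - d ∧
        0 < a ^ 2 - a * c + b * d - d ^ 2 := by
    rw [← isHurwitzStable_cayleyTransform_iff (heval ▸ h₁.ne'), cayleyTransform_cubic ha.ne',
      isHurwitzStable_cubic_iff h₁, ← sub_pos (b := (a + b + c + d) * (a - b + c - d)),
      show (3 * a + b - c - 3 * d) * (3 * a - b - c + 3 * d) - (a + b + c + d) * (a - b + c - d) =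
        8 * (a ^ 2 - a * c + b * d - d ^ 2) by ring, mul_pos_iff_of_pos_left (by norm_num)]
  constructor
  · intro h
    have h₁ : 0 < a + b + c + d := heval ▸ h.eval_one_pos hlc
    exact ⟨h₁, (hstable h₁).1 h⟩
  · rintro ⟨h₁, h⟩
    exact (hstable h₁).2 h

end RealCoefficients

theorem gPoly_eq_map_cubic (κ₁ κ₂ p ν : ℝ) :
    gPoly κ₁ κ₂ p ν = (C 1 * X ^ 3 + C (p - 3) * X ^ 2 + C (3 - 2 * p + κ₁ * ν) * X +
      C (p - 1 - (κ₁ - p * (κ₁ - κ₂)) * ν)).map (algebraMap ℝ ℂ) := by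
  simp only [gPoly, map_add, map_sub, map_mul, map_one, map_ofNat, Polynomial.map_add,
    Polynomial.map_sub, Polynomial.map_mul, Polynomial.map_pow, Polynomial.map_one,
    Polynomial.map_ofNat, map_X, map_C, Complex.coe_algebraMap]
  ring

theorem isSchurStable_gPoly_iff {κ₁ κ₂ p ν : ℝ} (hp₀ : 0 < p) (hp₂ : p < 2) (hν : 0 < ν) :
    IsSchurStable (gPoly κ₁ κ₂ p ν) ↔
      0 < κ₁ - κ₂ ∧ κ₁ - κ₂ < 2 * κ₁ / (3 * p) ∧
        ν < p * (κ₂ - p * (κ₁ - κ₂)) / (κ₁ - p * (κ₁ - κ₂)) ^ 2 := by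
  rw [gPoly_eq_map_cubic, isSchurStable_map_algebraMap, isSchurStable_cubic_iff one_pos]
  set δ := κ₁ - κ₂ with hδ
  have h₁ : 1 + (p - 3) + (3 - 2 * p + κ₁ * ν) + (p - 1 - (κ₁ - p * δ) * ν) = p * δ * ν := by ring
  have h₂ : 3 * 1 + (p - 3) - (3 - 2 * p + κ₁ * ν) - 3 * (p - 1 - (κ₁ - p * δ) * ν) =
      (2 * κ₁ - δ * (3 * p)) * ν := by ring
  have h₃ : 1 - (p - 3) + (3 - 2 * p + κ₁ * ν) - (p - 1 - (κ₁ - p * δ) * ν) =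
      4 * (2 - p) + (2 * κ₁ - δ * (3 * p)) * ν + 2 * (p * δ * ν) := by ring
  have h₄ : (1 : ℝ) ^ 2 - 1 * (3 - 2 * p + κ₁ * ν) + (p - 3) * (p - 1 - (κ₁ - p * δ) * ν) -
      (p - 1 - (κ₁ - p * δ) * ν) ^ 2 = (p * (κ₂ - p * δ) - ν * (κ₁ - p * δ) ^ 2) * ν := by
    rw [hδ]; ring
  rw [h₁, h₂, h₃, h₄, mul_pos_iff_of_pos_right hν, mul_pos_iff_of_pos_left hp₀,
    mul_pos_iff_of_pos_right hν, mul_pos_iff_of_pos_right hν,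
    sub_pos (a := 2 * κ₁), sub_pos (b := ν * _), lt_div_iff₀ (by positivity)]
  refine and_congr_right fun hδ_pos => and_congr_right fun hδ_lt => ?_
  have hpδ : 0 < p * δ := mul_pos hp₀ hδ_pos
  have hκ : 0 < κ₁ - p * δ := by linarith
  have hreal : 0 < 4 * (2 - p) + (2 * κ₁ - δ * (3 * p)) * ν + 2 * (p * δ * ν) := by
    have := sub_pos.2 hp₂
    have := sub_pos.2 hδ_lt
    positivity
  rw [and_iff_right hreal, lt_div_iff₀ (by positivity)]

theorem forall_lt_iff_lt_div_of_isGreatest {𝕜 ι : Type*} [Field 𝕜] [LinearOrder 𝕜]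
    [IsStrictOrderedRing 𝕜] {ν : ι → 𝕜} {τ μ B : 𝕜} (hτ : 0 < τ) (hμ₀ : 0 < μ)
    (hμ : IsGreatest (Set.range fun l => ν l / τ) μ) : (∀ l, ν l < B) ↔ τ < B / μ := by
  have hlt (l) : ν l < B ↔ ν l / τ < B / τ := (div_lt_div_iff_of_pos_right hτ).symm
  have hmax : (∀ l, ν l / τ < B / τ) ↔ μ < B / τ := by
    rw [hμ.lt_iff, Set.forall_mem_range]
  rw [forall_congr' hlt, hmax, lt_div_comm₀ hμ₀ hτ]

theorem stmt15_general {ι : Type*} (κ₁ κ₂ p τ : ℝ) (ν : ι → ℝ) (hν : ∀ l, 0 < ν l) (hτ : 0 < τ)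
    (μmax : ℝ) (hμ : IsGreatest (Set.range fun l => ν l / τ) μmax) :
    (|1 - p| < 1 ∧ ∀ l, ∀ z : ℂ, (gPoly κ₁ κ₂ p ((ν l : ℝ) : ℂ)).IsRoot z → ‖z‖ < 1) ↔
      (0 < p ∧ p < 2 ∧ 0 < κ₁ - κ₂ ∧ κ₁ - κ₂ < 2 * κ₁ / (3 * p) ∧
        τ < p * (κ₂ - p * (κ₁ - κ₂)) / (μmax * (κ₁ - p * (κ₁ - κ₂)) ^ 2)) := by
  have hμ₀ : 0 < μmax := by
    obtain ⟨l, rfl⟩ := hμ.1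
    exact div_pos (hν l) hτ
  have : Nonempty ι := Set.range_nonempty_iff_nonempty.1 hμ.nonempty
  have hp : |1 - p| < 1 ↔ 0 < p ∧ p < 2 := by
    rw [abs_lt]
    constructor <;> rintro ⟨h₁, h₂⟩ <;> constructor <;> linarith
  rw [hp, and_assoc]
  refine and_congr_right fun hp₀ => and_congr_right fun hp₂ => ?_
  simp only [← isSchurStable_iff_forall_isRoot, isSchurStable_gPoly_iff hp₀ hp₂ (hν _), forall_and,
    forall_const]
  rw [forall_lt_iff_lt_div_of_isGreatest hτ hμ₀ hμ, div_div, mul_comm (_ ^ 2)]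

theorem stmt15 (n : ℕ) (hn : 2 ≤ n) (κ₁ κ₂ p τ : ℝ)
    (ν : Fin (n - 1) → ℝ) (hν : ∀ l, 0 < ν l) (hτ : 0 < τ)
    (μmax : ℝ) (hμ : IsGreatest (Set.range fun l => ν l / τ) μmax) :
    (|1 - p| < 1
      ∧ ∀ l, ∀ z : ℂ, (gPoly κ₁ κ₂ p ((ν l : ℝ) : ℂ)).IsRoot z → ‖z‖ < 1)
    ↔ (0 < p ∧ p < 2
        ∧ 0 < κ₁ - κ₂ ∧ κ₁ - κ₂ < 2 * κ₁ / (3 * p)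
        ∧ τ < p * (κ₂ - p * (κ₁ - κ₂)) / (μmax * (κ₁ - p * (κ₁ - κ₂)) ^ 2)) :=
  stmt15_general κ₁ κ₂ p τ ν hν hτ μmax hμ
end
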